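/- arXiv:2207.09053 — 2 statements merged into one kernel-verified Lean document; each statement's English description precedes it below -/
import Mathlib

section
/- For a positive integer n, the number n! is a 4-layered number if and only if n ≥ 9. -/
/-- A positive integer `n` is `k`-layered if the set of all positive divisors of `n`
can be partitioned into `k` pairwise disjoint subsets (here given by the fibers of a
coloring `c`) each of which has the same sum. -/
def IsKLayered (n k : ℕ) : Prop :=
  ∃ c : ℕ → Fin k,
    ∀ i j : Fin k,
      ∑ d ∈ n.divisors.filter (fun d => c d = i), d =
      ∑ d ∈ n.divisors.filter (fun d => c d = j), d

/-! ### Sums over divisors of a coprime product -/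

theorem sum_div_mul {M : Type*} [AddCommMonoid M] {a b : ℕ} (h : a.Coprime b) (F : ℕ → M) :
    ∑ d ∈ (a * b).divisors, F d = ∑ x ∈ a.divisors, ∑ y ∈ b.divisors, F (x * y) := by
  rw [← Finset.sum_product', Nat.divisors_mul, Finset.mul_def]
  rw [Finset.sum_image]
  have := h.mul_injOn_divisors
  simpa using this

theorem gcd_left_of_mem {a b x y : ℕ} (h : a.Coprime b) (hx : x ∈ a.divisors)
    (hy : y ∈ b.divisors) : Nat.gcd (x * y) a = x := by
  have hx' := Nat.dvd_of_mem_divisors hx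
  have hy' := Nat.dvd_of_mem_divisors hy
  have : Nat.Coprime y a := (Nat.Coprime.coprime_dvd_right hy' h).symm
  rw [Nat.Coprime.gcd_mul_right_cancel x this]
  exact Nat.gcd_eq_left hx'

theorem gcd_right_of_mem {a b x y : ℕ} (h : a.Coprime b) (hx : x ∈ a.divisors)
    (hy : y ∈ b.divisors) : Nat.gcd (x * y) b = y := by
  rw [mul_comm]
  exact gcd_left_of_mem h.symm hy hx

theorem layered_mul {a b k : ℕ} (h : a.Coprime b) (ha : IsKLayered a k) :
    IsKLayered (a * b) k := by
  obtain ⟨c, hc⟩ := ha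
  refine ⟨fun d => c (Nat.gcd d a), ?_⟩
  have key : ∀ i : Fin k, ∑ d ∈ (a * b).divisors.filter (fun d => c (Nat.gcd d a) = i), d =
      (∑ x ∈ a.divisors.filter (fun d => c d = i), x) * ∑ y ∈ b.divisors, y := by
    intro i
    rw [Finset.sum_filter, sum_div_mul h, Finset.sum_filter, Finset.sum_mul]
    refine Finset.sum_congr rfl fun x hx => ?_
    rw [Finset.mul_sum]
    refine Finset.sum_congr rfl fun y hy => ?_
    rw [gcd_left_of_mem h hx hy]
    split_ifs <;> simp
  intro i j
  rw [key, key, hc i j]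

theorem layered_two_mul_two {a b : ℕ} (h : a.Coprime b) (ha : IsKLayered a 2)
    (hb : IsKLayered b 2) : IsKLayered (a * b) 4 := by
  obtain ⟨c, hc⟩ := ha
  obtain ⟨e, he⟩ := hb
  let φ : Fin 2 × Fin 2 ≃ Fin 4 := finProdFinEquiv
  refine ⟨fun d => φ (c (Nat.gcd d a), e (Nat.gcd d b)), ?_⟩
  have key : ∀ i : Fin 4, ∑ d ∈ (a * b).divisors.filter
        (fun d => φ (c (Nat.gcd d a), e (Nat.gcd d b)) = i), d =
      (∑ x ∈ a.divisors.filter (fun d => c d = (φ.symm i).1), x) *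
        ∑ y ∈ b.divisors.filter (fun d => e d = (φ.symm i).2), y := by
    intro i
    rw [Finset.sum_filter, sum_div_mul h, Finset.sum_filter, Finset.sum_filter, Finset.sum_mul]
    refine Finset.sum_congr rfl fun x hx => ?_
    rw [Finset.mul_sum]
    refine Finset.sum_congr rfl fun y hy => ?_
    rw [gcd_left_of_mem h hx hy, gcd_right_of_mem h hx hy]
    have : φ (c x, e y) = i ↔ c x = (φ.symm i).1 ∧ e y = (φ.symm i).2 := by
      rw [← Equiv.eq_symm_apply, Prod.ext_iff]
    rw [if_congr this rfl rfl]
    split_ifs <;> simp_all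
  intro i j
  rw [key, key, hc (φ.symm i).1 (φ.symm j).1, he (φ.symm i).2 (φ.symm j).2]

theorem layered_two_of_subset {n : ℕ} {u : Finset ℕ} (hu : u ⊆ n.divisors)
    (hs : 2 * ∑ d ∈ u, d = ∑ d ∈ n.divisors, d) : IsKLayered n 2 := by
  classical
  refine ⟨fun d => if d ∈ u then 0 else 1, ?_⟩
  have h0 : ∑ d ∈ n.divisors.filter (fun d => (if d ∈ u then (0 : Fin 2) else 1) = 0), d
      = ∑ d ∈ u, d := by
    congr 1
    ext d
    simp only [Finset.mem_filter]
    constructor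
    · rintro ⟨_, h⟩
      by_contra hd
      simp [hd] at h
    · intro h
      exact ⟨hu h, by simp [h]⟩
  have h1 : ∑ d ∈ n.divisors.filter (fun d => (if d ∈ u then (0 : Fin 2) else 1) = 1), d
      = ∑ d ∈ n.divisors \ u, d := by
    congr 1
    ext d
    simp only [Finset.mem_filter, Finset.mem_sdiff]
    refine and_congr_right fun _ => ?_
    by_cases hd : d ∈ u <;> simp [hd]
  have h2 := Finset.sum_sdiff (f := fun d : ℕ => d) hu
  have h3 : ∑ d ∈ n.divisors \ u, d = ∑ d ∈ u, d := by omega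
  intro i j
  fin_cases i <;> fin_cases j <;> simp only [Fin.zero_eta, Fin.mk_one] <;>
    first | rfl | (rw [h0, h1, h3])

/-! ### Finite sets whose subset sums cover a long interval -/

/-- All integers in `[A, Σ s - A]` are subset sums of `s`. -/
def Cov (s : Finset ℕ) (A : ℕ) : Prop :=
  ∀ t, A ≤ t → t + A ≤ ∑ x ∈ s, x → ∃ u ⊆ s, ∑ x ∈ u, x = t

theorem cov_insert {s : Finset ℕ} {A x : ℕ} (h : Cov s A) (hx : x ∉ s)
    (hle : x + 2 * A ≤ ∑ y ∈ s, y + 1) : Cov (insert x s) A := by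
  intro t h1 h2
  rw [Finset.sum_insert hx] at h2
  by_cases ht : t + A ≤ ∑ y ∈ s, y
  · obtain ⟨u, hu, hs⟩ := h t h1 ht
    exact ⟨u, hu.trans (Finset.subset_insert _ _), hs⟩
  · obtain ⟨u, hu, hs⟩ := h (t - x) (by omega) (by omega)
    refine ⟨insert x u, Finset.insert_subset_insert _ hu, ?_⟩
    rw [Finset.sum_insert (fun hh => hx (hu hh)), hs]
    omega

theorem cov_union {s : Finset ℕ} {A : ℕ} (h : Cov s A) (T : Finset ℕ) :
    Disjoint s T → (∀ x ∈ T, x + 2 * A ≤ ∑ y ∈ s, y + ∑ y ∈ T.filter (fun y => y < x), y + 1) →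
    Cov (s ∪ T) A := by
  induction T using Finset.induction_on_max with
  | empty => intro _ _; simpa using h
  | insert a T hmax ih =>
    intro hd hc
    have haT : a ∉ T := fun h => lt_irrefl _ (hmax a h)
    rw [Finset.disjoint_insert_right] at hd
    have ih' := ih hd.2 (by
      intro x hx
      have := hc x (Finset.mem_insert_of_mem hx)
      rwa [Finset.filter_insert, if_neg (by have := hmax x hx; omega)] at this)
    rw [Finset.union_insert]
    refine cov_insert ih' ?_ ?_
    · simp [hd.1, haT]
    · have := hc a (Finset.mem_insert_self _ _)
      rw [Finset.filter_insert, if_neg (lt_irrefl a), Finset.filter_true_of_mem hmax] at this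
      rw [Finset.sum_union hd.2]
      exact this

theorem divisors_pow_succ_mul {p k r : ℕ} (hp : p.Prime) (hr : ¬ p ∣ r) :
    (p ^ (k + 1) * r).divisors =
      (p ^ k * r).divisors ∪ r.divisors.image (fun e => p ^ (k + 1) * e) ∧
    Disjoint (p ^ k * r).divisors (r.divisors.image (fun e => p ^ (k + 1) * e)) := by
  have hr0 : r ≠ 0 := by rintro rfl; simp at hr
  have hp0 := hp.pos
  constructor
  · ext d
    simp only [Nat.mem_divisors, Finset.mem_union, Finset.mem_image]
    constructor
    · rintro ⟨h, _⟩
      obtain ⟨x, y, hx, hy, rfl⟩ := exists_dvd_and_dvd_of_dvd_mul h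
      obtain ⟨i, hi, rfl⟩ := (Nat.dvd_prime_pow hp).1 hx
      rcases Nat.lt_or_ge k i with hik | hik
      · right
        exact ⟨y, ⟨hy, hr0⟩, by rw [show i = k + 1 by omega]⟩
      · left
        exact ⟨mul_dvd_mul (pow_dvd_pow _ hik) hy, by positivity⟩
    · rintro (⟨h, _⟩ | ⟨y, ⟨hy, _⟩, rfl⟩)
      · exact ⟨h.trans (mul_dvd_mul (pow_dvd_pow _ (by omega)) dvd_rfl), by positivity⟩
      · exact ⟨mul_dvd_mul dvd_rfl hy, by positivity⟩
  · rw [Finset.disjoint_left]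
    intro d hd hd'
    simp only [Nat.mem_divisors, Finset.mem_image] at hd hd'
    obtain ⟨y, ⟨hy, _⟩, rfl⟩ := hd'
    have h1 := hd.1
    rw [pow_succ, mul_assoc] at h1
    have h2 := Nat.dvd_of_mul_dvd_mul_left (by positivity) h1
    exact hr ((dvd_mul_right _ _).trans h2)

theorem cov_step {p k r A : ℕ} (hp : p.Prime) (hr : ¬ p ∣ r) (h : Cov (p ^ k * r).divisors A)
    (hc : ∀ e ∈ r.divisors, p ^ (k + 1) * e + 2 * A ≤ ∑ y ∈ (p ^ k * r).divisors, y +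
      p ^ (k + 1) * ∑ f ∈ r.divisors.filter (fun f => f < e), f + 1) :
    Cov (p ^ (k + 1) * r).divisors A := by
  have hp0 := hp.pos
  have hpk : 0 < p ^ (k + 1) := by positivity
  obtain ⟨h1, h2⟩ := divisors_pow_succ_mul (k := k) hp hr
  rw [h1]
  refine cov_union h _ h2 ?_
  intro x hx
  obtain ⟨e, he, rfl⟩ := Finset.mem_image.1 hx
  have := hc e he
  rw [Finset.filter_image, Finset.sum_image (by
    intro a _ b _ hab
    exact Nat.eq_of_mul_eq_mul_left hpk hab), ← Finset.mul_sum]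
  simpa [hpk] using this

theorem sigma_step {p k r : ℕ} (hp : p.Prime)
    (h : 128 * (p ^ k * r) ≤ 63 * ∑ y ∈ (p ^ k * r).divisors, y) :
    128 * (p ^ (k + 1) * r) ≤ 63 * ∑ y ∈ (p ^ (k + 1) * r).divisors, y := by
  have hp0 := hp.pos
  have : p * ∑ y ∈ (p ^ k * r).divisors, y ≤ ∑ y ∈ (p ^ (k + 1) * r).divisors, y := by
    rw [Finset.mul_sum, ← Finset.sum_image (s := (p ^ k * r).divisors) (g := fun y => p * y)
      (f := fun y => y) (by
        intro a _ b _ hab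
        exact Nat.eq_of_mul_eq_mul_left hp0 hab)]
    refine Finset.sum_le_sum_of_subset ?_
    intro d hd
    obtain ⟨y, hy, rfl⟩ := Finset.mem_image.1 hd
    rw [Nat.mem_divisors] at hy ⊢
    obtain ⟨h1, h2⟩ := hy
    have e : p ^ (k + 1) * r = p * (p ^ k * r) := by ring
    rw [e]
    exact ⟨mul_dvd_mul dvd_rfl h1, mul_ne_zero hp0.ne' h2⟩
  have e : p ^ (k + 1) * r = p * (p ^ k * r) := by ring
  rw [e] at this ⊢
  nlinarith

def Good (m : ℕ) : Prop := Cov m.divisors 3 ∧ 128 * m ≤ 63 * ∑ y ∈ m.divisors, y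

theorem good_step {p k r : ℕ} (hp : p.Prime) (hr : ¬ p ∣ r) (h : Good (p ^ k * r))
    (hc : ∀ e ∈ r.divisors, p ^ (k + 1) * e + 6 ≤ ∑ y ∈ (p ^ k * r).divisors, y +
      p ^ (k + 1) * ∑ f ∈ r.divisors.filter (fun f => f < e), f + 1) :
    Good (p ^ (k + 1) * r) :=
  ⟨cov_step hp hr h.1 hc, sigma_step hp h.2⟩

theorem divisors_945 : (945 : ℕ).divisors =
    {1, 3, 5, 7} ∪ {9, 15, 21, 27, 35, 45, 63, 105, 135, 189, 315, 945} := by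
  decide +kernel

theorem good_945 : Good 945 := by
  constructor
  · rw [divisors_945]
    refine cov_union ?_ _ (by decide) (by decide)
    intro t h1 h2
    have key : ∀ t ∈ Finset.Icc 3 13, ∃ u ∈ ({1, 3, 5, 7} : Finset ℕ).powerset,
        ∑ x ∈ u, x = t := by decide
    have h3 : ∑ x ∈ ({1, 3, 5, 7} : Finset ℕ), x = 16 := by decide
    obtain ⟨u, hu, h⟩ := key t (Finset.mem_Icc.2 ⟨h1, by omega⟩)
    exact ⟨u, Finset.mem_powerset.1 hu, h⟩
  · rw [divisors_945]; decide

theorem sum_le_filter {r e : ℕ} (s : Finset ℕ) (hs : ∀ x ∈ s, x ∣ r ∧ x < e) (hr : r ≠ 0) :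
    ∑ x ∈ s, x ≤ ∑ f ∈ r.divisors.filter (fun f => f < e), f := by
  refine Finset.sum_le_sum_of_subset fun x hx => ?_
  rw [Finset.mem_filter, Nat.mem_divisors]
  exact ⟨⟨(hs x hx).1, hr⟩, (hs x hx).2⟩

theorem good_three (b : ℕ) : Good (3 ^ (b + 3) * 35) := by
  induction b with
  | zero => exact good_945
  | succ b ih =>
    refine good_step (k := b + 3) Nat.prime_three (by norm_num) ih ?_
    have h := ih.2
    have e35 : (35 : ℕ).divisors = {1, 5, 7, 35} := by decide
    have hP : 27 ≤ 3 ^ (b + 3) := by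
      calc 27 = 3 ^ 3 := by norm_num
        _ ≤ _ := Nat.pow_le_pow_right (by norm_num) (by omega)
    rw [pow_succ 3 (b + 3)]
    generalize ∑ y ∈ (3 ^ (b + 3) * 35).divisors, y = S at *
    generalize 3 ^ (b + 3) = P at *
    intro e he
    have hle : ∑ f ∈ (35 : ℕ).divisors.filter (fun f => f < 35), f = 13 := by decide
    rw [e35] at he
    simp only [Finset.mem_insert, Finset.mem_singleton] at he
    rcases he with rfl | rfl | rfl | rfl
    · have := Nat.zero_le (P * 3 * ∑ f ∈ (35 : ℕ).divisors.filter (fun f => f < 1), f)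
      omega
    · have := Nat.zero_le (P * 3 * ∑ f ∈ (35 : ℕ).divisors.filter (fun f => f < 5), f)
      omega
    · have := Nat.zero_le (P * 3 * ∑ f ∈ (35 : ℕ).divisors.filter (fun f => f < 7), f)
      omega
    · rw [hle]
      omega

theorem good_five (b c : ℕ) : Good (5 ^ (c + 1) * (3 ^ (b + 3) * 7)) := by
  induction c with
  | zero =>
    have := good_three b
    rwa [show 5 ^ (0 + 1) * (3 ^ (b + 3) * 7) = 3 ^ (b + 3) * 35 by ring]
  | succ c ih =>
    have hnd : ¬ 5 ∣ 3 ^ (b + 3) * 7 := by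
      rw [Nat.prime_five.dvd_mul]
      rintro (h | h)
      · have := Nat.prime_five.dvd_of_dvd_pow h
        omega
      · omega
    refine good_step (k := c + 1) Nat.prime_five hnd ih ?_
    have h := ih.2
    rw [pow_succ 5 (c + 1)]
    have hu0 : 0 < 3 ^ (b + 1) := by positivity
    have hP0 : 0 < 5 ^ (c + 1) := by positivity
    have hodd : Odd (3 ^ (b + 3) * 7) := (Odd.pow (by decide)).mul (by decide)
    have hr : 3 ^ (b + 3) * 7 = 63 * 3 ^ (b + 1) := by ring
    rw [hr] at ih h hodd ⊢
    generalize 3 ^ (b + 1) = u at *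
    generalize 5 ^ (c + 1) = P at *
    generalize ∑ y ∈ (P * (63 * u)).divisors, y = S at *
    have hPu : 0 < P * u := by positivity
    intro e he
    obtain ⟨t, ht⟩ := Nat.dvd_of_mem_divisors he
    have hto : Odd t := by rw [ht] at hodd; exact (Nat.odd_mul.1 hodd).2
    obtain ⟨w, rfl⟩ := hto
    rcases Nat.eq_zero_or_pos w with rfl | hw
    · have he' : e = 63 * u := by omega
      subst he'
      have := sum_le_filter (r := 63 * u) (e := 63 * u) {21 * u, 7 * u, 9 * u, 3 * u} (by
        intro x hx
        simp only [Finset.mem_insert, Finset.mem_singleton] at hx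
        rcases hx with rfl | rfl | rfl | rfl
        · exact ⟨⟨3, by ring⟩, by omega⟩
        · exact ⟨⟨9, by ring⟩, by omega⟩
        · exact ⟨⟨7, by ring⟩, by omega⟩
        · exact ⟨⟨21, by ring⟩, by omega⟩) (by omega)
      rw [Finset.sum_insert, Finset.sum_insert, Finset.sum_insert, Finset.sum_singleton] at this
      · nlinarith
      all_goals
        simp only [Finset.mem_insert, Finset.mem_singleton]
        omega
    · have he' : 3 * e ≤ 63 * u := by rw [ht]; nlinarith
      have h3 : P * (3 * e) ≤ P * (63 * u) := Nat.mul_le_mul_left _ he'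
      have := Nat.zero_le (P * 5 * ∑ f ∈ (63 * u).divisors.filter (fun f => f < e), f)
      nlinarith

theorem good_seven (b c d : ℕ) : Good (7 ^ (d + 1) * (3 ^ (b + 3) * 5 ^ (c + 1))) := by
  induction d with
  | zero =>
    have := good_five b c
    rwa [show 7 ^ (0 + 1) * (3 ^ (b + 3) * 5 ^ (c + 1)) =
      5 ^ (c + 1) * (3 ^ (b + 3) * 7) by ring]
  | succ d ih =>
    have h7 : Nat.Prime 7 := by norm_num
    have hnd : ¬ 7 ∣ 3 ^ (b + 3) * 5 ^ (c + 1) := by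
      rw [h7.dvd_mul]
      rintro (h | h)
      · have := h7.dvd_of_dvd_pow h
        omega
      · have := h7.dvd_of_dvd_pow h
        omega
    refine good_step (k := d + 1) h7 hnd ih ?_
    have h := ih.2
    rw [pow_succ 7 (d + 1)]
    have hu0 : 0 < 3 ^ b * 5 ^ c := by positivity
    have hP0 : 0 < 7 ^ (d + 1) := by positivity
    have hodd : Odd (3 ^ (b + 3) * 5 ^ (c + 1)) :=
      (Odd.pow (by decide)).mul (Odd.pow (by decide))
    have hr : 3 ^ (b + 3) * 5 ^ (c + 1) = 135 * (3 ^ b * 5 ^ c) := by ring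
    rw [hr] at ih h hodd ⊢
    generalize 3 ^ b * 5 ^ c = u at *
    generalize 7 ^ (d + 1) = P at *
    generalize ∑ y ∈ (P * (135 * u)).divisors, y = S at *
    have hPu : 0 < P * u := by positivity
    intro e he
    obtain ⟨t, ht⟩ := Nat.dvd_of_mem_divisors he
    have hto : Odd t := by rw [ht] at hodd; exact (Nat.odd_mul.1 hodd).2
    obtain ⟨w, rfl⟩ := hto
    rcases Nat.lt_or_ge w 2 with hw | hw
    · interval_cases w
      · have he' : e = 135 * u := by omega
        subst he'
        have := sum_le_filter (r := 135 * u) (e := 135 * u)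
          {45 * u, 15 * u, 27 * u, 9 * u, 5 * u} (by
          intro x hx
          simp only [Finset.mem_insert, Finset.mem_singleton] at hx
          rcases hx with rfl | rfl | rfl | rfl | rfl
          · exact ⟨⟨3, by ring⟩, by omega⟩
          · exact ⟨⟨9, by ring⟩, by omega⟩
          · exact ⟨⟨5, by ring⟩, by omega⟩
          · exact ⟨⟨15, by ring⟩, by omega⟩
          · exact ⟨⟨27, by ring⟩, by omega⟩) (by omega)
        rw [Finset.sum_insert, Finset.sum_insert, Finset.sum_insert, Finset.sum_insert,
          Finset.sum_singleton] at this
        · nlinarith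
        all_goals
          simp only [Finset.mem_insert, Finset.mem_singleton]
          omega
      · have he' : e = 45 * u := by omega
        subst he'
        have := sum_le_filter (r := 135 * u) (e := 45 * u) {15 * u, 27 * u} (by
          intro x hx
          simp only [Finset.mem_insert, Finset.mem_singleton] at hx
          rcases hx with rfl | rfl
          · exact ⟨⟨9, by ring⟩, by omega⟩
          · exact ⟨⟨5, by ring⟩, by omega⟩) (by omega)
        rw [Finset.sum_insert, Finset.sum_singleton] at this
        · nlinarith
        all_goals
          simp only [Finset.mem_singleton]
          omega
    · have he' : 5 * e ≤ 135 * u := by rw [ht]; nlinarith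
      have h3 : P * (5 * e) ≤ P * (135 * u) := Nat.mul_le_mul_left _ he'
      have := Nat.zero_le (P * 7 * ∑ f ∈ (135 * u).divisors.filter (fun f => f < e), f)
      nlinarith

theorem cov_two_pow (a : ℕ) : Cov (2 ^ a).divisors 0 ∧
    ∑ y ∈ (2 ^ a).divisors, y + 1 = 2 ^ (a + 1) := by
  induction a with
  | zero =>
    constructor
    · intro t _ h2
      simp only [pow_zero, Nat.divisors_one, Finset.sum_singleton] at h2 ⊢
      have h3 : t = 0 ∨ t = 1 := by omega
      rcases h3 with rfl | rfl
      · exact ⟨∅, by simp, by simp⟩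
      · exact ⟨{1}, by simp, by simp⟩
    · simp
  | succ a ih =>
    obtain ⟨h1, h2⟩ := divisors_pow_succ_mul (k := a) (r := 1) Nat.prime_two (by norm_num)
    simp only [mul_one, Nat.divisors_one, Finset.image_singleton] at h1 h2
    rw [Finset.union_comm, ← Finset.insert_eq] at h1
    rw [Finset.disjoint_singleton_right] at h2
    rw [h1]
    refine ⟨cov_insert ih.1 h2 (by omega), ?_⟩
    rw [Finset.sum_insert h2, pow_succ 2 (a + 1)]
    omega

/-- The key construction of Zumkeller numbers. -/
theorem layered_two_of_cov {m q A : ℕ} (hm : Cov m.divisors A) (hq : q.Prime) (hq2 : q ≠ 2)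
    (hqm : m.Coprime q) (h1 : q + 2 * A ≤ ∑ y ∈ m.divisors, y + 1)
    (h2 : 2 * A ≤ ∑ y ∈ m.divisors, y) : IsKLayered (m * q) 2 := by
  classical
  obtain ⟨h, hh⟩ := hq.odd_of_ne_two hq2
  have hsum := hqm.sum_divisors_mul
  rw [hq.sum_divisors] at hsum
  set s := ∑ y ∈ m.divisors, y with hs
  have hq0 := hq.pos
  have hm0 : m ≠ 0 := by
    rintro rfl
    simp at hqm
    exact hq.ne_one hqm
  have hA : A ≤ (h + 1) * s := by nlinarith
  obtain ⟨r, hr⟩ : ∃ r, r = ((h + 1) * s - A) % q := ⟨_, rfl⟩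
  obtain ⟨t, ht⟩ : ∃ t, t = ((h + 1) * s - A) / q := ⟨_, rfl⟩
  have hdiv : q * t + r + A = (h + 1) * s := by
    have := Nat.div_add_mod ((h + 1) * s - A) q
    rw [← hr, ← ht] at this
    omega
  have hrq : r < q := hr ▸ Nat.mod_lt _ hq0
  have ht1 : A ≤ t := by
    by_contra hcon
    have : t + 1 ≤ A := by omega
    have := Nat.mul_le_mul_left q this
    nlinarith
  have ht2 : t + A ≤ s := by
    by_contra hcon
    have : s + 1 ≤ t + A := by omega
    have := Nat.mul_le_mul_left q this
    nlinarith
  obtain ⟨v, hv, hvs⟩ := hm t ht1 ht2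
  obtain ⟨u, hu, hus⟩ := hm (A + r) (by omega) (by omega)
  have hdis : Disjoint u (v.image (fun x => q * x)) := by
    rw [Finset.disjoint_left]
    intro x hx hx'
    obtain ⟨y, hy, rfl⟩ := Finset.mem_image.1 hx'
    have h3 := Nat.dvd_of_mem_divisors (hu hx)
    have h4 : q ∣ m := (dvd_mul_right _ _).trans h3
    exact hq.ne_one (Nat.Coprime.eq_one_of_dvd hqm.symm h4)
  refine layered_two_of_subset (u := u ∪ v.image (fun x => q * x)) ?_ ?_
  · refine Finset.union_subset ?_ ?_
    · intro x hx
      have := Nat.dvd_of_mem_divisors (hu hx)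
      exact Nat.mem_divisors.2 ⟨this.mul_right _, mul_ne_zero hm0 hq0.ne'⟩
    · intro x hx
      obtain ⟨y, hy, rfl⟩ := Finset.mem_image.1 hx
      have := Nat.dvd_of_mem_divisors (hv hy)
      rw [mul_comm m q]
      exact Nat.mem_divisors.2 ⟨mul_dvd_mul dvd_rfl this, mul_ne_zero hq0.ne' hm0⟩
  · rw [Finset.sum_union hdis, Finset.sum_image (by
      intro a _ b _ hab
      exact Nat.eq_of_mul_eq_mul_left hq0 hab), ← Finset.mul_sum, hvs, hus, hsum, hh]
    rw [hh] at hdiv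
    nlinarith

/-! ### Two primes in `(n, 2n]` -/

section TwoPrimes

open Real in
theorem real_main_ineq_two {x : ℝ} (x_large : (512 : ℝ) ≤ x) :
    x * (2 * x) * (2 * x) ^ √(2 * x) * 4 ^ (2 * x / 3) ≤ 4 ^ x := by
  let f : ℝ → ℝ := fun x => log x + (log x + √(2 * x) * log (2 * x)) - log 4 / 3 * x
  have h5 : 0 < x := lt_of_lt_of_le (by norm_num1) x_large
  have h : ConcaveOn ℝ (Set.Ioi 0.5) f := by
    apply ConcaveOn.sub
    · apply ConcaveOn.add
      · exact strictConcaveOn_log_Ioi.concaveOn.subset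
          (Set.Ioi_subset_Ioi (by norm_num)) (convex_Ioi 0.5)
      apply ConcaveOn.add
      · exact strictConcaveOn_log_Ioi.concaveOn.subset
          (Set.Ioi_subset_Ioi (by norm_num)) (convex_Ioi 0.5)
      convert!
        ((strictConcaveOn_sqrt_mul_log_Ioi.concaveOn.comp_linearMap ((2 : ℝ) • LinearMap.id)))
        using 1
      ext x
      simp only [Set.mem_Ioi, Set.mem_preimage, LinearMap.smul_apply,
        LinearMap.id_coe, id_eq, smul_eq_mul]
      rw [← mul_lt_mul_iff_right₀ (two_pos)]
      norm_num1
      rfl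
    apply ConvexOn.smul
    · refine div_nonneg (log_nonneg (by norm_num1)) (by norm_num1)
    · exact convexOn_id (convex_Ioi (0.5 : ℝ))
  have l4 : log 4 = 2 * log 2 := by
    rw [show (4 : ℝ) = 2 ^ (2 : ℕ) by norm_num, log_pow]; norm_num
  have l2 : 0 < log 2 := log_pos (by norm_num)
  have h512 : f 512 ≤ - log 2 := by
    have s : √(2 * 512 : ℝ) = 32 :=
      (sqrt_eq_iff_mul_self_eq_of_pos (by norm_num1)).mpr (by norm_num1)
    have a : log (512 : ℝ) = 9 * log 2 := by
      rw [show (512 : ℝ) = 2 ^ (9 : ℕ) by norm_num, log_pow]; norm_num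
    have b : log (2 * 512 : ℝ) = 10 * log 2 := by
      rw [show (2 * 512 : ℝ) = 2 ^ (10 : ℕ) by norm_num, log_pow]; norm_num
    simp only [f]
    rw [s, a, b, l4]
    nlinarith
  have h18 : 0 ≤ f 18 := by
    have s : √(2 * 18 : ℝ) = 6 :=
      (sqrt_eq_iff_mul_self_eq_of_pos (by norm_num1)).mpr (by norm_num1)
    have a : 4 * log 2 ≤ log (18 : ℝ) := by
      rw [show 4 * log 2 = log (2 ^ (4 : ℕ)) by rw [log_pow]; norm_num]
      exact log_le_log (by norm_num) (by norm_num)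
    have b : 5 * log 2 ≤ log (2 * 18 : ℝ) := by
      rw [show 5 * log 2 = log (2 ^ (5 : ℕ)) by rw [log_pow]; norm_num]
      exact log_le_log (by norm_num) (by norm_num)
    simp only [f]
    rw [s, l4]
    generalize log (2 * 18 : ℝ) = y at b ⊢
    generalize log (18 : ℝ) = z at a ⊢
    linarith
  have hfx : f x ≤ - log 2 := by
    refine (h.right_le_of_le_left'' (x := 18) (y := 512) (z := x) ?_ ?_ ?_ x_large ?_).trans h512
    · simp; norm_num
    · simp; linarith
    · norm_num
    · linarith
  have h2x : 0 < 2 * x := by positivity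
  rw [← log_le_log_iff (by positivity) (by positivity),
    log_mul (by positivity) (by positivity), log_mul (by positivity) (by positivity),
    log_mul (by positivity) (by positivity), log_rpow h2x, log_rpow (by norm_num),
    log_rpow (by norm_num)]
  simp only [f] at hfx
  have l2x : log (2 * x) = log 2 + log x := log_mul (by norm_num) h5.ne'
  nlinarith

open Nat

theorem main_ineq_two {n : ℕ} (n_large : 512 ≤ n) :
    n * (2 * n) * (2 * n) ^ sqrt (2 * n) * 4 ^ (2 * n / 3) ≤ 4 ^ n := by
  rw [← @cast_le ℝ]
  simp only [cast_mul, cast_pow, ← Real.rpow_natCast, cast_ofNat]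
  refine _root_.trans ?_ (real_main_ineq_two (by exact_mod_cast n_large))
  gcongr
  · have n2_pos : 0 < 2 * n := by positivity
    exact mod_cast n2_pos
  · exact_mod_cast Real.nat_sqrt_le_real_sqrt
  · norm_num1
  · exact cast_div_le.trans (by norm_cast)

theorem centralBinom_le_of_one_prime (n q : ℕ) (n_large : 2 < n)
    (one_prime : ∀ p : ℕ, p.Prime → n < p → p ≤ 2 * n → p = q) :
    centralBinom n ≤ (2 * n) * ((2 * n) ^ sqrt (2 * n) * 4 ^ (2 * n / 3)) := by
  have n_pos : 0 < n := (Nat.zero_le _).trans_lt n_large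
  have n2_pos : 1 ≤ 2 * n := mul_pos (zero_lt_two' ℕ) n_pos
  let S := {p ∈ Finset.range (2 * n / 3 + 1) | Nat.Prime p}
  let f x := x ^ n.centralBinom.factorization x
  have hf2 : ∀ p, f p ≤ 2 * n := fun p => pow_factorization_choose_le (mul_pos two_pos n_pos)
  have h1 : centralBinom n ≤ (2 * n) * ∏ x ∈ S, f x := by
    have e1 : ∏ x ∈ insert q S, f x = centralBinom n := by
      have e2 : ∏ x ∈ insert q S, f x = ∏ x ∈ insert q S ∪ Finset.range (2 * n + 1), f x := by
        apply Finset.prod_subset Finset.subset_union_left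
        intro x hx hx'
        have hx2 : x ∈ Finset.range (2 * n + 1) := by
          rcases Finset.mem_union.1 hx with h | h
          · exact absurd h hx'
          · exact h
        rw [Finset.mem_insert, not_or] at hx'
        obtain ⟨hxq, hxS⟩ := hx'
        rw [Finset.mem_range] at hx2
        by_cases hp : x.Prime
        · have h2x : ¬ x < 2 * n / 3 + 1 := fun h =>
            hxS (Finset.mem_filter.2 ⟨Finset.mem_range.2 h, hp⟩)
          have hxn : x ≤ n := by
            by_contra hc
            exact hxq (one_prime x hp (by omega) (by omega))
          simp only [f]
          rw [factorization_centralBinom_of_two_mul_self_lt_three_mul n_large hxn (by omega),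
            Nat.pow_zero]
        · simp only [f]
          rw [factorization_eq_zero_of_not_prime n.centralBinom hp, Nat.pow_zero]
      rw [e2, ← n.prod_pow_factorization_centralBinom]
      symm
      apply Finset.prod_subset Finset.subset_union_right
      intro x _ hx
      rw [Finset.mem_range] at hx
      rw [factorization_centralBinom_eq_zero_of_two_mul_lt (by omega), Nat.pow_zero]
    rw [← e1]
    by_cases hqS : q ∈ S
    · rw [Finset.insert_eq_of_mem hqS]
      exact Nat.le_mul_of_pos_left _ n2_pos
    · rw [Finset.prod_insert hqS]
      exact Nat.mul_le_mul_right _ (hf2 q)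
  refine h1.trans (Nat.mul_le_mul_left _ ?_)
  rw [← Finset.prod_filter_mul_prod_filter_not S (· ≤ sqrt (2 * n))]
  apply mul_le_mul'
  · refine (Finset.prod_le_prod' fun p _ => (hf2 p : f p ≤ 2 * n)).trans ?_
    have : (Finset.Icc 1 (sqrt (2 * n))).card = sqrt (2 * n) := by rw [card_Icc, Nat.add_sub_cancel]
    rw [Finset.prod_const]
    refine pow_right_mono₀ n2_pos ((Finset.card_le_card fun x hx => ?_).trans this.le)
    obtain ⟨h1, h2⟩ := Finset.mem_filter.1 hx
    exact Finset.mem_Icc.mpr ⟨(Finset.mem_filter.1 h1).2.one_lt.le, h2⟩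
  · refine le_trans ?_ (primorial_le_four_pow (2 * n / 3))
    refine (Finset.prod_le_prod' fun p hp => (?_ : f p ≤ p)).trans ?_
    · obtain ⟨h1, h2⟩ := Finset.mem_filter.1 hp
      refine (pow_right_mono₀ (Finset.mem_filter.1 h1).2.one_lt.le ?_).trans (pow_one p).le
      exact Nat.factorization_choose_le_one (sqrt_lt'.mp <| not_le.1 h2)
    refine Finset.prod_le_prod_of_subset_of_one_le' (Finset.filter_subset _ _) ?_
    exact fun p hp _ => (Finset.mem_filter.1 hp).2.one_lt.le

theorem two_primes_large (n : ℕ) (hn : 512 ≤ n) :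
    ∃ p q : ℕ, p.Prime ∧ q.Prime ∧ p ≠ q ∧ n < p ∧ p ≤ 2 * n ∧ n < q ∧ q ≤ 2 * n := by
  obtain ⟨q, hq, hq1, hq2⟩ := Nat.exists_prime_lt_and_le_two_mul n (by omega)
  by_contra! hcon
  have one : ∀ p : ℕ, p.Prime → n < p → p ≤ 2 * n → p = q := by
    intro p hp h1 h2
    by_contra hne
    have := hcon p q hp hq hne h1 h2 hq1
    omega
  have h1 := centralBinom_le_of_one_prime n q (by omega) one
  have h2 := Nat.four_pow_lt_mul_centralBinom n (by omega)
  have h3 := main_ineq_two hn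
  have h4 := Nat.mul_le_mul_left n h1
  have h5 : n * (2 * n * ((2 * n) ^ sqrt (2 * n) * 4 ^ (2 * n / 3))) =
    n * (2 * n) * (2 * n) ^ sqrt (2 * n) * 4 ^ (2 * n / 3) := by ring
  omega

theorem two_primes (N : ℕ) (hN : 13 ≤ N) :
    ∃ p q : ℕ, p.Prime ∧ q.Prime ∧ p ≠ q ∧ 11 ≤ p ∧ 11 ≤ q ∧
      N < 2 * p ∧ p ≤ N ∧ N < 2 * q ∧ q ≤ N := by
  by_cases h : 1024 ≤ N
  · obtain ⟨p, q, hp, hq, hne, h1, h2, h3, h4⟩ := two_primes_large (N / 2) (by omega)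
    exact ⟨p, q, hp, hq, hne, by omega, by omega, by omega, by omega, by omega, by omega⟩
  · have aux : ∀ p q : ℕ, p.Prime → q.Prime → 11 ≤ p → p < q → q ≤ N → N < 2 * p →
        ∃ p q : ℕ, p.Prime ∧ q.Prime ∧ p ≠ q ∧ 11 ≤ p ∧ 11 ≤ q ∧
          N < 2 * p ∧ p ≤ N ∧ N < 2 * q ∧ q ≤ N := by
      intro p q hp hq h1 h2 h3 h4
      exact ⟨p, q, hp, hq, by omega, by omega, by omega, by omega, by omega, by omega, by omega⟩
    by_cases h1 : N < 22
    · exact aux 11 13 (by norm_num) (by norm_num) (by omega) (by omega) (by omega) (by omega)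
    by_cases h2 : N < 34
    · exact aux 17 19 (by norm_num) (by norm_num) (by omega) (by omega) (by omega) (by omega)
    by_cases h3 : N < 58
    · exact aux 29 31 (by norm_num) (by norm_num) (by omega) (by omega) (by omega) (by omega)
    by_cases h4 : N < 94
    · exact aux 47 53 (by norm_num) (by norm_num) (by omega) (by omega) (by omega) (by omega)
    by_cases h5 : N < 166
    · exact aux 83 89 (by norm_num) (by norm_num) (by omega) (by omega) (by omega) (by omega)
    by_cases h6 : N < 314
    · exact aux 157 163 (by norm_num) (by norm_num) (by omega) (by omega) (by omega) (by omega)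
    by_cases h7 : N < 622
    · exact aux 311 313 (by norm_num) (by norm_num) (by omega) (by omega) (by omega) (by omega)
    exact aux 617 619 (by norm_num) (by norm_num) (by omega) (by omega) (by omega) (by omega)

end TwoPrimes

/-! ### Small factorials -/

theorem sum_four_primes {M : Type*} [AddCommMonoid M] (a b c d : ℕ) (F : ℕ → M) :
    ∑ x ∈ (2 ^ a * (3 ^ b * (5 ^ c * 7 ^ d))).divisors, F x =
      ∑ i ∈ Finset.range (a + 1), ∑ j ∈ Finset.range (b + 1), ∑ k ∈ Finset.range (c + 1),
        ∑ l ∈ Finset.range (d + 1), F (2 ^ i * (3 ^ j * (5 ^ k * 7 ^ l))) := by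
  have h57 : Nat.Coprime (5 ^ c) (7 ^ d) := Nat.Coprime.pow _ _ (by norm_num)
  have h3 : Nat.Coprime (3 ^ b) (5 ^ c * 7 ^ d) :=
    Nat.Coprime.mul_right (Nat.Coprime.pow _ _ (by norm_num)) (Nat.Coprime.pow _ _ (by norm_num))
  have h2 : Nat.Coprime (2 ^ a) (3 ^ b * (5 ^ c * 7 ^ d)) :=
    Nat.Coprime.mul_right (Nat.Coprime.pow _ _ (by norm_num))
      (Nat.Coprime.mul_right (Nat.Coprime.pow _ _ (by norm_num))
        (Nat.Coprime.pow _ _ (by norm_num)))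
  rw [sum_div_mul h2, Nat.sum_divisors_prime_pow Nat.prime_two]
  refine Finset.sum_congr rfl fun i _ => ?_
  rw [sum_div_mul h3, Nat.sum_divisors_prime_pow Nat.prime_three]
  refine Finset.sum_congr rfl fun j _ => ?_
  rw [sum_div_mul h57, Nat.sum_divisors_prime_pow Nat.prime_five]
  refine Finset.sum_congr rfl fun k _ => ?_
  rw [Nat.sum_divisors_prime_pow (by norm_num)]

theorem layered_nine : IsKLayered (Nat.factorial 9) 4 := by
  rw [show Nat.factorial 9 = 2 ^ 7 * (3 ^ 4 * (5 ^ 1 * 7 ^ 1)) by decide]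
  refine ⟨fun d => if d ∈ [362880, 6720, 648, 12] then 0 else
    if d ∈ [181440, 120960, 60480, 6480, 896, 4] then 1 else
    if d ∈ [90720, 72576, 51840, 45360, 40320, 36288, 30240, 2880, 36] then 2 else 3, ?_⟩
  suffices h : ∀ i, _ = 370260 from fun i j => (h i).trans (h j).symm
  intro i
  rw [Finset.sum_filter, sum_four_primes]
  revert i
  decide +kernel

theorem layered_ten : IsKLayered (Nat.factorial 10) 4 := by
  rw [show Nat.factorial 10 = 2 ^ 8 * (3 ^ 4 * (5 ^ 2 * 7 ^ 1)) by decide]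
  refine ⟨fun d => if d ∈ [3628800, 201600, 3024, 90, 8] then 0 else
    if d ∈ [1814400, 907200, 725760, 362880, 22400, 864, 18] then 1 else
    if d ∈ [1209600, 604800, 518400, 453600, 403200, 302400, 259200, 80640, 1680, 2]
      then 2 else 3, ?_⟩
  suffices h : ∀ i, _ = 3833522 from fun i j => (h i).trans (h j).symm
  intro i
  rw [Finset.sum_filter, sum_four_primes]
  revert i
  decide +kernel

theorem layered_eleven : IsKLayered (Nat.factorial 11) 4 := by
  rw [Nat.factorial_succ, mul_comm]
  refine layered_mul ?_ layered_ten
  decide +kernel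

theorem layered_twelve : IsKLayered (Nat.factorial 12) 4 := by
  have h1 : IsKLayered (2 ^ 10 * 11) 2 := by
    have h := cov_two_pow 10
    exact layered_two_of_cov h.1 (by norm_num) (by norm_num) (by norm_num)
      (by have := h.2; norm_num at this ⊢; omega) (by omega)
  have h2 : IsKLayered (2 ^ 0 * (3 ^ 5 * (5 ^ 2 * 7 ^ 1))) 2 := by
    have h := (good_seven 2 1 0).1
    have hs : ∑ x ∈ (2 ^ 0 * (3 ^ 5 * (5 ^ 2 * 7 ^ 1))).divisors, x = 90272 := by
      rw [sum_four_primes]; decide +kernel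
    rw [show 7 ^ (0 + 1) * (3 ^ (2 + 3) * 5 ^ (1 + 1)) = 2 ^ 0 * (3 ^ 5 * (5 ^ 2 * 7 ^ 1))
      by norm_num] at h
    obtain ⟨u, hu, hus⟩ := h 45136 (by norm_num) (by rw [hs]; norm_num)
    exact layered_two_of_subset hu (by rw [hus, hs])
  have := layered_two_mul_two (by decide +kernel) h1 h2
  rwa [show Nat.factorial 12 = 2 ^ 10 * 11 * (2 ^ 0 * (3 ^ 5 * (5 ^ 2 * 7 ^ 1))) by decide]

theorem four_mul_le_of_layered {n : ℕ} (hn : n ≠ 0) (h : IsKLayered n 4) :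
    4 * n ≤ ∑ d ∈ n.divisors, d := by
  obtain ⟨c, hc⟩ := h
  have h1 : n ≤ ∑ d ∈ n.divisors.filter (fun d => c d = c n), d :=
    Finset.single_le_sum (f := fun d : ℕ => d) (fun _ _ => Nat.zero_le _)
      (Finset.mem_filter.2 ⟨Nat.mem_divisors_self n hn, rfl⟩)
  have h2 := Finset.sum_fiberwise n.divisors c (fun d => d)
  rw [← h2]
  calc 4 * n = ∑ _i : Fin 4, n := by simp
    _ ≤ _ := Finset.sum_le_sum fun i _ => by rw [hc i (c n)]; exact h1

theorem sigma_mul_le (m t : ℕ) (hm : m ≠ 0) (ht : t ≠ 0) :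
    t * ∑ y ∈ m.divisors, y ≤ ∑ y ∈ (m * t).divisors, y := by
  rw [Finset.mul_sum, ← Finset.sum_image (s := m.divisors) (g := fun y => t * y)
    (f := fun y => y) (by
      intro a _ b _ hab
      exact Nat.eq_of_mul_eq_mul_left (Nat.pos_of_ne_zero ht) hab)]
  refine Finset.sum_le_sum_of_subset ?_
  intro d hd
  obtain ⟨y, hy, rfl⟩ := Finset.mem_image.1 hd
  rw [Nat.mem_divisors] at hy ⊢
  rw [mul_comm m t]
  exact ⟨mul_dvd_mul dvd_rfl hy.1, mul_ne_zero ht hm⟩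

theorem not_layered_small {n : ℕ} (hn : n ≤ 8) : ¬ IsKLayered n.factorial 4 := by
  intro h
  have h1 := four_mul_le_of_layered (Nat.factorial_ne_zero n) h
  obtain ⟨t, ht⟩ := Nat.factorial_dvd_factorial hn
  have ht0 : t ≠ 0 := by
    rintro rfl
    exact Nat.factorial_ne_zero 8 (by simpa using ht)
  have h2 := sigma_mul_le n.factorial t (Nat.factorial_ne_zero n) ht0
  rw [← ht] at h2
  have hs : ∑ x ∈ (Nat.factorial 8).divisors, x = 159120 := by
    rw [show Nat.factorial 8 = 2 ^ 7 * (3 ^ 2 * (5 ^ 1 * 7 ^ 1)) by decide, sum_four_primes]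
    decide +kernel
  rw [hs] at h2
  have h8 : Nat.factorial 8 = 40320 := by decide
  rw [h8] at ht
  have h3 := Nat.mul_le_mul_left t h1
  nlinarith

/-! ### The general case -/

theorem le_of_pow_dvd {p a k r : ℕ} (hp : p.Prime) (hr : ¬ p ∣ r) (h : p ^ k ∣ p ^ a * r) :
    k ≤ a := by
  by_contra hc
  have h1 : p ^ (a + 1) ∣ p ^ a * r := (pow_dvd_pow p (by omega)).trans h
  rw [pow_succ] at h1
  exact hr (Nat.dvd_of_mul_dvd_mul_left (pow_pos hp.pos a) h1)

theorem not_sq_dvd_factorial {p n : ℕ} (hp : p.Prime) (h2 : 2 < p) (h : n < 2 * p) :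
    ¬ p ^ 2 ∣ n.factorial := by
  intro hd
  have h1 := (hp.pow_dvd_iff_le_factorization (Nat.factorial_ne_zero n)).1 hd
  have hlog : Nat.log p n < 2 := by
    apply Nat.log_lt_of_lt_pow' (by norm_num)
    nlinarith
  rw [Nat.factorization_factorial hp hlog] at h1
  simp only [Nat.Ico_succ_singleton, Finset.sum_singleton, pow_one] at h1
  have := Nat.div_lt_of_lt_mul (show n < p * 2 by omega)
  omega

theorem lt_pow_succ {p n a : ℕ} (hp : p.Prime) (hn : n ≠ 0)
    (h : ∀ k, p ^ k ∣ n.factorial → k ≤ a) : n < p ^ (a + 1) := by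
  have h1 := h (Nat.log p n) (Nat.dvd_factorial (pow_pos hp.pos _) (Nat.pow_log_le_self p hn))
  exact (Nat.lt_pow_succ_log_self hp.one_lt n).trans_le
    (Nat.pow_le_pow_right hp.pos (by omega))

/-- Strip one prime from the remaining cofactor. -/
theorem strip {N M r p : ℕ} (hN : N = M * r) (hN0 : N ≠ 0) (hp : p.Prime) (hM : M.Coprime p) :
    ∃ a r', r = p ^ a * r' ∧ ¬ p ∣ r' ∧ ∀ k, p ^ k ∣ N → k ≤ a := by
  have hr0 : r ≠ 0 := by rintro rfl; simp at hN; exact hN0 hN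
  obtain ⟨a, r', h1, h2⟩ := Nat.exists_eq_pow_mul_and_not_dvd hr0 p hp.ne_one
  refine ⟨a, r', h2, h1, fun k hk => ?_⟩
  rw [hN] at hk
  have h3 : p ^ k ∣ r := (Nat.Coprime.pow_left k hM.symm).dvd_of_dvd_mul_left hk
  rw [h2] at h3
  exact le_of_pow_dvd hp h1 h3

theorem strip_one {n M r p : ℕ} (hN : n.factorial = M * r) (hp : p.Prime) (hM : M.Coprime p)
    (hp2 : 2 < p) (h1 : n < 2 * p) (h2 : p ≤ n) : ∃ r', r = p * r' ∧ ¬ p ∣ r' := by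
  obtain ⟨a, r', h3, h4, h5⟩ := strip hN (Nat.factorial_ne_zero n) hp hM
  have h6 := h5 1 (by rw [pow_one]; exact Nat.dvd_factorial hp.pos h2)
  have h7 : ¬ 2 ≤ a := by
    intro h
    apply not_sq_dvd_factorial hp hp2 h1
    rw [hN, h3]
    exact ((pow_dvd_pow p h).mul_right r').mul_left M
  have : a = 1 := by omega
  subst this
  exact ⟨r', by rw [h3, pow_one], h4⟩

theorem layered_large {n : ℕ} (hn : 13 ≤ n) : IsKLayered n.factorial 4 := by
  obtain ⟨p, q, hp, hq, hpq, hp11, hq11, hp1, hp2, hq1, hq2⟩ := two_primes n hn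
  have hN0 := Nat.factorial_ne_zero n
  have p2 := Nat.prime_two
  have p3 := Nat.prime_three
  have p5 := Nat.prime_five
  have p7 : Nat.Prime 7 := by norm_num
  have cp : ∀ {x y : ℕ}, x.Prime → y.Prime → x ≠ y → ∀ i, Nat.Coprime (x ^ i) y :=
    fun hx hy hxy i => Nat.Coprime.pow_left i ((Nat.coprime_primes hx hy).2 hxy)
  have cpq : Nat.Coprime p q := (Nat.coprime_primes hp hq).2 hpq
  obtain ⟨a, r1, e1, n1, m1⟩ := strip (one_mul n.factorial).symm hN0 p2 (Nat.coprime_one_left 2)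
  obtain ⟨b, r2, e2, n2, m2⟩ := strip (M := 2 ^ a) (r := r1) e1 hN0 p3
    (cp p2 p3 (by norm_num) a)
  have f2 : n.factorial = 2 ^ a * 3 ^ b * r2 := by rw [e1, e2]; ring
  obtain ⟨c, r3, e3, n3, m3⟩ := strip f2 hN0 p5
    ((cp p2 p5 (by norm_num) a).mul_left (cp p3 p5 (by norm_num) b))
  have f3 : n.factorial = 2 ^ a * 3 ^ b * 5 ^ c * r3 := by rw [f2, e3]; ring
  obtain ⟨d, r4, e4, n4, m4⟩ := strip f3 hN0 p7
    (((cp p2 p7 (by norm_num) a).mul_left (cp p3 p7 (by norm_num) b)).mul_left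
      (cp p5 p7 (by norm_num) c))
  have f4 : n.factorial = 2 ^ a * 3 ^ b * 5 ^ c * 7 ^ d * r4 := by rw [f3, e4]; ring
  have cM : ∀ {x : ℕ}, x.Prime → 11 ≤ x → Nat.Coprime (2 ^ a * 3 ^ b * 5 ^ c * 7 ^ d) x := by
    intro x hx h11
    exact ((((cp p2 hx (by omega) a).mul_left (cp p3 hx (by omega) b)).mul_left
      (cp p5 hx (by omega) c))).mul_left (cp p7 hx (by omega) d)
  obtain ⟨r5, e5, n5⟩ := strip_one f4 hp (cM hp hp11) (by omega) hp1 hp2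
  have f5 : n.factorial = 2 ^ a * 3 ^ b * 5 ^ c * 7 ^ d * p * r5 := by rw [f4, e5]; ring
  obtain ⟨r6, e6, n6⟩ := strip_one f5 hq ((cM hq hq11).mul_left cpq) (by omega) hq1 hq2
  have d5 : r6 ∣ r5 := ⟨q, by rw [e6, mul_comm]⟩
  have d4 : r6 ∣ r4 := d5.trans ⟨p, by rw [e5, mul_comm]⟩
  have d3 : r6 ∣ r3 := d4.trans ⟨7 ^ d, by rw [e4, mul_comm]⟩
  have d2 : r6 ∣ r2 := d3.trans ⟨5 ^ c, by rw [e3, mul_comm]⟩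
  have d1 : r6 ∣ r1 := d2.trans ⟨3 ^ b, by rw [e2, mul_comm]⟩
  have cr : ∀ {x s : ℕ}, x.Prime → ¬ x ∣ s → r6 ∣ s → Nat.Coprime x r6 :=
    fun hx hs hd => (hx.coprime_iff_not_dvd).2 fun h => hs (h.trans hd)
  -- sizes of the exponents
  have f9 : Nat.factorial 9 ∣ n.factorial := Nat.factorial_dvd_factorial (by omega)
  have hb : 3 ≤ b := m2 3 ((by decide : 3 ^ 3 ∣ Nat.factorial 9).trans f9)
  have hc : 1 ≤ c := m3 1 ((by decide : 5 ^ 1 ∣ Nat.factorial 9).trans f9)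
  have hd : 1 ≤ d := m4 1 ((by decide : 7 ^ 1 ∣ Nat.factorial 9).trans f9)
  have hn2 : n < 2 ^ (a + 1) := lt_pow_succ p2 (by omega) m1
  have hn3 : n < 3 ^ (b + 1) := lt_pow_succ p3 (by omega) m2
  have L1 : IsKLayered (2 ^ a * p) 2 := by
    have h := cov_two_pow a
    exact layered_two_of_cov h.1 hp (by omega) (cp p2 hp (by omega) a) (by omega) (by omega)
  have L2 : IsKLayered (7 ^ d * (3 ^ b * 5 ^ c) * q) 2 := by
    have h : Good (7 ^ d * (3 ^ b * 5 ^ c)) := by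
      have := good_seven (b - 3) (c - 1) (d - 1)
      rwa [show d - 1 + 1 = d by omega, show b - 3 + 3 = b by omega,
        show c - 1 + 1 = c by omega] at this
    have h5 : 1 ≤ 5 ^ c := Nat.one_le_pow _ _ (by norm_num)
    have h7 : 7 ^ 1 ≤ 7 ^ d := Nat.pow_le_pow_right (by norm_num) hd
    have hm : 7 * 3 ^ b ≤ 7 ^ d * (3 ^ b * 5 ^ c) := by
      refine Nat.mul_le_mul (by simpa using h7) ?_
      exact Nat.le_mul_of_pos_right _ h5
    rw [pow_succ] at hn3
    have hs := h.2
    refine layered_two_of_cov h.1 hq (by omega) ?_ (by omega) (by omega)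
    exact (cp p7 hq (by omega) d).mul_left
      ((cp p3 hq (by omega) b).mul_left (cp p5 hq (by omega) c))
  have cc : Nat.Coprime (2 ^ a * p) (7 ^ d * (3 ^ b * 5 ^ c) * q) := by
    have hpM := (cM hp hp11).symm
    refine Nat.Coprime.mul_left ?_ ?_
    · refine Nat.Coprime.mul_right (Nat.Coprime.mul_right ?_ (Nat.Coprime.mul_right ?_ ?_)) ?_
      · exact Nat.Coprime.pow_right d (cp p2 p7 (by norm_num) a)
      · exact Nat.Coprime.pow_right b (cp p2 p3 (by norm_num) a)
      · exact Nat.Coprime.pow_right c (cp p2 p5 (by norm_num) a)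
      · exact cp p2 hq (by omega) a
    · refine Nat.Coprime.mul_right (Nat.Coprime.mul_right ?_ (Nat.Coprime.mul_right ?_ ?_)) cpq
      · exact (cp p7 hp (by omega) d).symm
      · exact (cp p3 hp (by omega) b).symm
      · exact (cp p5 hp (by omega) c).symm
  have c6 : Nat.Coprime (2 ^ a * p * (7 ^ d * (3 ^ b * 5 ^ c) * q)) r6 := by
    refine Nat.Coprime.mul_left (Nat.Coprime.mul_left ?_ ?_) (Nat.Coprime.mul_left
      (Nat.Coprime.mul_left ?_ (Nat.Coprime.mul_left ?_ ?_)) ?_)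
    · exact Nat.Coprime.pow_left a (cr p2 n1 d1)
    · exact cr hp n5 d5
    · exact Nat.Coprime.pow_left d (cr p7 n4 d4)
    · exact Nat.Coprime.pow_left b (cr p3 n2 d2)
    · exact Nat.Coprime.pow_left c (cr p5 n3 d3)
    · exact cr hq n6 dvd_rfl
  have := layered_mul c6 (layered_two_mul_two cc L1 L2)
  have f6 : n.factorial = 2 ^ a * p * (7 ^ d * (3 ^ b * 5 ^ c) * q) * r6 := by
    rw [f5, e6]; ring
  rwa [f6]

/-- For a positive integer `n`, the number `n!` is `4`-layered if and only if `n ≥ 9`. -/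
theorem factorial_four_layered_iff (n : ℕ) (hn : 0 < n) :
    IsKLayered (n.factorial) 4 ↔ 9 ≤ n := by
  constructor
  · intro h
    by_contra hc
    exact not_layered_small (by omega) h
  · intro h
    rcases Nat.lt_or_ge n 13 with h13 | h13
    · have h4 : n = 9 ∨ n = 10 ∨ n = 11 ∨ n = 12 := by omega
      rcases h4 with rfl | rfl | rfl | rfl
      · exact layered_nine
      · exact layered_ten
      · exact layered_eleven
      · exact layered_twelve
    · exact layered_large h13
end

section
/- Let n ≥ 11 be an integer and write the prime factorization of n! as p_1^{α_1}·p_2^{α_2}···p_k^{α_k} with primes 2 = p_1 < p_2 < ⋯ < p_k and all α_i ≥ 1. Then α_{k−1} = α_k = 1, p_k ≤ 2^{α_1}, and there exists a prime q with q ≡ 2 (mod 3) such that q divides n! exactly to the first power (q ∣ n! and q² ∤ n!). -/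
open ArithmeticFunction Chebyshev

/-- The nontrivial character mod 3, with real values. -/
noncomputable def chiThree (m : ℕ) : ℝ :=
  if m % 3 = 1 then 1 else if m % 3 = 2 then -1 else 0

theorem chiThree_mul (a b : ℕ) : chiThree (a * b) = chiThree a * chiThree b := by
  have h : (a * b) % 3 = ((a % 3) * (b % 3)) % 3 := Nat.mul_mod a b 3
  have ha : a % 3 = 0 ∨ a % 3 = 1 ∨ a % 3 = 2 := by omega
  have hb : b % 3 = 0 ∨ b % 3 = 1 ∨ b % 3 = 2 := by omega
  unfold chiThree
  rw [h]
  rcases ha with ha | ha | ha <;> rcases hb with hb | hb | hb <;> rw [ha, hb] <;> norm_num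

/-- The character as an arithmetic function. -/
noncomputable def chiThreeAF : ArithmeticFunction ℝ := ⟨chiThree, by simp [chiThree]⟩

theorem chiThreeAF_apply (m : ℕ) : chiThreeAF m = chiThree m := rfl

theorem sum_chiThree (N : ℕ) :
    ∑ m ∈ Finset.Ioc 0 N, chiThree m = if N % 3 = 1 then 1 else 0 := by
  induction N with
  | zero => simp
  | succ k ih =>
    rw [← Finset.insert_Ioc_right_eq_Ioc_add_one (Nat.zero_le k),
      Finset.sum_insert (by simp), ih]
    unfold chiThree
    have hb : k % 3 = 0 ∨ k % 3 = 1 ∨ k % 3 = 2 := by omega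
    rcases hb with hb | hb | hb
    · rw [show (k + 1) % 3 = 1 by omega, hb]; norm_num
    · rw [show (k + 1) % 3 = 2 by omega, hb]; norm_num
    · rw [show (k + 1) % 3 = 0 by omega, hb]; norm_num

theorem sum_chi_log (N : ℕ) :
    ∑ m ∈ Finset.Ioc 0 N, chiThree m * Real.log m =
      ∑ d ∈ Finset.Ioc 0 N, vonMangoldt d * (chiThree d * if (N / d) % 3 = 1 then 1 else 0) := by
  have h := sum_Ioc_mul_eq_sum_sum (vonMangoldt.pmul chiThreeAF) chiThreeAF N
  have h1 : ∀ m, ((vonMangoldt.pmul chiThreeAF) * chiThreeAF) m = chiThree m * Real.log m := by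
    intro m
    rw [mul_apply, ← vonMangoldt_sum, ← Nat.map_div_right_divisors, Finset.sum_map, Finset.mul_sum]
    refine Finset.sum_congr rfl fun d hd => ?_
    have hd' := Nat.dvd_of_mem_divisors hd
    change (vonMangoldt.pmul chiThreeAF) d * chiThreeAF (m / d) = _
    rw [pmul_apply, chiThreeAF_apply, chiThreeAF_apply]
    rw [mul_assoc, ← chiThree_mul, Nat.mul_div_cancel' hd', mul_comm]
  simp only [h1] at h
  rw [h]
  refine Finset.sum_congr rfl fun d _ => ?_
  simp only [pmul_apply, chiThreeAF_apply]
  rw [sum_chiThree, mul_assoc]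

theorem sum_chi_log_le (N : ℕ) (hN : 1 ≤ N) :
    ∑ m ∈ Finset.Ioc 0 N, chiThree m * Real.log m ≤ Real.log N := by
  have step : ∀ k, ∑ m ∈ Finset.Ioc 0 (k + 1), chiThree m * Real.log m =
      chiThree (k + 1) * Real.log ((k + 1 : ℕ) : ℝ) +
        ∑ m ∈ Finset.Ioc 0 k, chiThree m * Real.log m := by
    intro k
    rw [← Finset.insert_Ioc_right_eq_Ioc_add_one (Nat.zero_le k), Finset.sum_insert (by simp)]
  have c1 : ∀ j, chiThree (3 * j + 1) = 1 := by
    intro j; unfold chiThree; rw [if_pos (by omega)]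
  have c2 : ∀ j, chiThree (3 * j + 1 + 1) = -1 := by
    intro j; unfold chiThree; rw [if_neg (by omega), if_pos (by omega)]
  have c3 : ∀ j, chiThree (3 * j + 1 + 1 + 1) = 0 := by
    intro j; unfold chiThree; rw [if_neg (by omega), if_neg (by omega)]
  have mono : ∀ j : ℕ, Real.log ((3 * j + 1 : ℕ) : ℝ) ≤ Real.log ((3 * j + 1 + 1 : ℕ) : ℝ) := by
    intro j
    apply Real.log_le_log
    · positivity
    · push_cast; linarith
  have key : ∀ j, ∑ m ∈ Finset.Ioc 0 (3 * j), chiThree m * Real.log m ≤ 0 := by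
    intro j
    induction j with
    | zero => simp
    | succ j ih =>
      rw [show 3 * (j + 1) = 3 * j + 1 + 1 + 1 by ring, step, step, step, c1, c2, c3]
      linarith [mono j]
  have hpos : 0 ≤ Real.log (N : ℝ) := Real.log_natCast_nonneg N
  obtain ⟨j, hj⟩ : ∃ j, N = 3 * j ∨ N = 3 * j + 1 ∨ N = 3 * j + 1 + 1 := ⟨N / 3, by omega⟩
  rcases hj with rfl | rfl | rfl
  · linarith [key j]
  · rw [step, c1]; linarith [key j]
  · rw [step, step, c1, c2]; linarith [key j, mono j]

theorem log_factorial_eq (N : ℕ) :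
    Real.log (N.factorial : ℝ) = ∑ d ∈ Finset.Ioc 0 N, vonMangoldt d * ((N / d : ℕ) : ℝ) := by
  rw [← sum_Ioc_mul_zeta_eq_sum, vonMangoldt_mul_zeta]
  induction N with
  | zero => simp
  | succ k ih =>
    rw [← Finset.insert_Ioc_right_eq_Ioc_add_one (Nat.zero_le k), Finset.sum_insert (by simp),
      ← ih, Nat.factorial_succ, Nat.cast_mul, Real.log_mul (by positivity) (by positivity)]
    simp [log_apply]

theorem log_central_eq (N : ℕ) :
    Real.log (N.factorial : ℝ) - 2 * Real.log ((N / 2).factorial : ℝ) =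
      ∑ d ∈ Finset.Ioc 0 N, vonMangoldt d * (((N / d) % 2 : ℕ) : ℝ) := by
  have h2 : Real.log ((N / 2).factorial : ℝ) =
      ∑ d ∈ Finset.Ioc 0 N, vonMangoldt d * ((N / 2 / d : ℕ) : ℝ) := by
    rw [log_factorial_eq]
    apply Finset.sum_subset (Finset.Ioc_subset_Ioc_right (Nat.div_le_self _ _))
    intro d hd hd'
    simp only [Finset.mem_Ioc] at hd hd'
    rw [Nat.div_eq_of_lt (a := N / 2) (by omega)]
    simp
  rw [h2, log_factorial_eq, Finset.mul_sum, ← Finset.sum_sub_distrib]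
  refine Finset.sum_congr rfl fun d _ => ?_
  have e : N / 2 / d = N / d / 2 := by rw [Nat.div_div_eq_div_mul, Nat.div_div_eq_div_mul, mul_comm]
  have e2 : ((N / d : ℕ) : ℝ) = 2 * ((N / d / 2 : ℕ) : ℝ) + ((N / d % 2 : ℕ) : ℝ) := by
    exact_mod_cast (Nat.div_add_mod (N / d) 2).symm
  rw [e, e2]; ring

theorem log_central_ge (N : ℕ) :
    N * Real.log 2 - Real.log (N + 1) ≤
      Real.log (N.factorial : ℝ) - 2 * Real.log ((N / 2).factorial : ℝ) := by
  have h1 : 2 ^ N ≤ (N + 1) * N.choose (N / 2) := by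
    rw [← Nat.sum_range_choose]
    calc _ ≤ ∑ k ∈ Finset.range (N + 1), N.choose (N / 2) :=
          Finset.sum_le_sum fun k _ => Nat.choose_le_middle k N
      _ = _ := by simp
  have h2 : 2 ^ N * ((N / 2).factorial * (N / 2).factorial) ≤ (N + 1) * N.factorial := by
    rw [← Nat.choose_mul_factorial_mul_factorial (Nat.div_le_self N 2)]
    calc _ ≤ ((N + 1) * N.choose (N / 2)) * ((N / 2).factorial * (N - N / 2).factorial) := by
          gcongr; omega
      _ = _ := by ring
  have h3 : (2 : ℝ) ^ N * (((N / 2).factorial : ℝ) * ((N / 2).factorial : ℝ)) ≤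
      ((N : ℝ) + 1) * (N.factorial : ℝ) := by exact_mod_cast h2
  have h4 := Real.log_le_log (by positivity) h3
  rw [Real.log_mul (by positivity) (by positivity), Real.log_mul (by positivity) (by positivity),
    Real.log_mul (by positivity) (by positivity), Real.log_pow] at h4
  linarith

theorem coeff_le (N d : ℕ) (hd : 0 < d) (hdN : d ≤ N)
    (hS : ¬ (N / 2 < d ∧ d % 3 = 2)) (h3 : d % 3 ≠ 0 ∨ d ≤ N / 2) :
    (((N / d) % 2 : ℕ) : ℝ) - chiThree d * (if (N / d) % 3 = 1 then 1 else 0) ≤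
      (if d ≤ N / 3 then 1 else 0) + (if d ≤ N / 7 then 1 else 0) := by
  have e3 : d ≤ N / 3 ↔ 3 ≤ N / d := by
    rw [Nat.le_div_iff_mul_le (by norm_num), Nat.le_div_iff_mul_le hd, mul_comm]
  have e7 : d ≤ N / 7 ↔ 7 ≤ N / d := by
    rw [Nat.le_div_iff_mul_le (by norm_num), Nat.le_div_iff_mul_le hd, mul_comm]
  have e2 : d ≤ N / 2 ↔ 2 ≤ N / d := by
    rw [Nat.le_div_iff_mul_le (by norm_num), Nat.le_div_iff_mul_le hd, mul_comm]
  have e1 : 1 ≤ N / d := Nat.div_pos hdN hd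
  rw [← not_le] at hS
  simp only [e2, e3, e7] at *
  generalize N / d = m at *
  have hc : -1 ≤ chiThree d := by unfold chiThree; split_ifs <;> norm_num
  by_cases hm1 : m = 1
  · subst hm1
    have : d % 3 = 1 := by omega
    simp [chiThree, this]
  have hmod : ((m % 2 : ℕ) : ℝ) ≤ 1 := by
    have : m % 2 ≤ 1 := by omega
    exact_mod_cast this
  by_cases h7 : 7 ≤ m
  · rw [if_pos (show 3 ≤ m by omega), if_pos h7]
    split_ifs <;> linarith
  · rw [if_neg h7]
    have : m = 2 ∨ m = 3 ∨ m = 4 ∨ m = 5 ∨ m = 6 := by omega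
    rcases this with rfl | rfl | rfl | rfl | rfl <;> norm_num <;> linarith

theorem coeff_le_two (N d : ℕ) :
    (((N / d) % 2 : ℕ) : ℝ) - chiThree d * (if (N / d) % 3 = 1 then 1 else 0) ≤ 2 := by
  have hc : -1 ≤ chiThree d := by unfold chiThree; split_ifs <;> norm_num
  have hmod : ((N / d % 2 : ℕ) : ℝ) ≤ 1 := by
    have : N / d % 2 ≤ 1 := by omega
    exact_mod_cast this
  split_ifs <;> linarith

theorem theta_nat (N c : ℕ) :
    ∑ d ∈ Finset.Ioc 0 N, (if d.Prime ∧ d ≤ N / c then Real.log d else 0) =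
      theta ((N / c : ℕ) : ℝ) := by
  rw [theta, Nat.floor_natCast, ← Finset.sum_filter]
  apply Finset.sum_congr _ fun _ _ => rfl
  ext d
  have := Nat.div_le_self N c
  simp only [Finset.mem_filter, Finset.mem_Ioc]
  grind

theorem main_upper (N : ℕ) (hN : 7 ≤ N)
    (hS : ∀ q r : ℕ, q.Prime → r.Prime → q % 3 = 2 → r % 3 = 2 → N / 2 < q → N / 2 < r →
      q ≤ N → r ≤ N → q = r) :
    N * Real.log 2 - Real.log (N + 1) ≤ Real.log N + theta ((N / 3 : ℕ) : ℝ) +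
      theta ((N / 7 : ℕ) : ℝ) + 2 * (psi N - theta N) + 2 * Real.log N := by
  have hG := log_central_ge N
  rw [log_central_eq] at hG
  have hH := sum_chi_log_le N (by omega)
  rw [sum_chi_log] at hH
  have hSsum : ∑ d ∈ Finset.Ioc 0 N,
      (if d.Prime ∧ d % 3 = 2 ∧ N / 2 < d then Real.log d else 0) ≤ Real.log N := by
    rw [← Finset.sum_filter]
    have hcard : (Finset.filter (fun d => d.Prime ∧ d % 3 = 2 ∧ N / 2 < d)
        (Finset.Ioc 0 N)).card ≤ 1 := by
      rw [Finset.card_le_one]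
      intro a ha b hb
      simp only [Finset.mem_filter, Finset.mem_Ioc] at ha hb
      exact hS a b ha.2.1 hb.2.1 ha.2.2.1 hb.2.2.1 ha.2.2.2 hb.2.2.2 ha.1.2 hb.1.2
    have hle := Finset.sum_le_card_nsmul (Finset.filter (fun d => d.Prime ∧ d % 3 = 2 ∧ N / 2 < d)
        (Finset.Ioc 0 N)) (fun d => Real.log (d : ℝ)) (Real.log N) (by
      intro d hd
      simp only [Finset.mem_filter, Finset.mem_Ioc] at hd
      apply Real.log_le_log
      · exact_mod_cast hd.1.1
      · exact_mod_cast hd.1.2)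
    refine hle.trans ?_
    rw [nsmul_eq_mul]
    have h0 : 0 ≤ Real.log (N : ℝ) := Real.log_natCast_nonneg N
    have : (((Finset.filter (fun d => d.Prime ∧ d % 3 = 2 ∧ N / 2 < d)
        (Finset.Ioc 0 N)).card : ℕ) : ℝ) ≤ 1 := by exact_mod_cast hcard
    nlinarith
  have hnp := psi_sub_theta_eq_sum_not_prime (N : ℝ)
  rw [Nat.floor_natCast, Finset.sum_filter] at hnp
  have hterm : ∀ d ∈ Finset.Ioc 0 N,
      vonMangoldt d * (((N / d) % 2 : ℕ) : ℝ) -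
        vonMangoldt d * (chiThree d * if (N / d) % 3 = 1 then 1 else 0) ≤
      (if d.Prime ∧ d ≤ N / 3 then Real.log d else 0) +
      (if d.Prime ∧ d ≤ N / 7 then Real.log d else 0) +
      2 * (if ¬ d.Prime then vonMangoldt d else 0) +
      2 * (if d.Prime ∧ d % 3 = 2 ∧ N / 2 < d then Real.log d else 0) := by
    intro d hd
    rw [Finset.mem_Ioc] at hd
    rw [← mul_sub]
    have hL : 0 ≤ vonMangoldt d := vonMangoldt_nonneg
    have hlog : 0 ≤ Real.log (d : ℝ) := Real.log_natCast_nonneg d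
    have h2 := coeff_le_two N d
    have n3 : 0 ≤ (if d.Prime ∧ d ≤ N / 3 then Real.log (d : ℝ) else 0) := by
      split_ifs <;> simp [hlog]
    have n7 : 0 ≤ (if d.Prime ∧ d ≤ N / 7 then Real.log (d : ℝ) else 0) := by
      split_ifs <;> simp [hlog]
    by_cases hp : d.Prime
    · rw [vonMangoldt_apply_prime hp]
      by_cases hs : N / 2 < d ∧ d % 3 = 2
      · rw [if_pos (show d.Prime ∧ d % 3 = 2 ∧ N / 2 < d from ⟨hp, hs.2, hs.1⟩),
          if_neg (not_not.mpr hp)]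
        nlinarith
      · have h3 : d % 3 ≠ 0 ∨ d ≤ N / 2 := by
          by_cases h0 : d % 3 = 0
          · right
            have : 3 = d := (Nat.prime_dvd_prime_iff_eq Nat.prime_three hp).1
              (Nat.dvd_of_mod_eq_zero h0)
            omega
          · exact Or.inl h0
        have hc := coeff_le N d hd.1 hd.2 hs h3
        rw [if_neg (show ¬ (d.Prime ∧ d % 3 = 2 ∧ N / 2 < d) from fun h => hs ⟨h.2.2, h.2.1⟩),
          if_neg (not_not.mpr hp)]
        simp only [hp, true_and]
        refine (mul_le_mul_of_nonneg_left hc hlog).trans ?_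
        rw [mul_add]
        simp
    · rw [if_pos hp, if_neg (show ¬ (d.Prime ∧ d % 3 = 2 ∧ N / 2 < d) from fun h => hp h.1)]
      nlinarith
  have hsum := Finset.sum_le_sum hterm
  rw [Finset.sum_sub_distrib, Finset.sum_add_distrib, Finset.sum_add_distrib,
    Finset.sum_add_distrib, theta_nat, theta_nat, ← Finset.mul_sum, ← Finset.mul_sum, ← hnp] at hsum
  linarith

theorem large_case (N : ℕ) (hN : 2 ^ 24 ≤ N) :
    ∃ q r : ℕ, q.Prime ∧ r.Prime ∧ q ≠ r ∧ q % 3 = 2 ∧ N < 2 * q ∧ N < 2 * r ∧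
      q ≤ N ∧ r ≤ N := by
  by_contra hcon
  have hU := main_upper N (by omega) (by
    intro q r hq hr hq3 hr3 h1 h2 h3 h4
    by_contra hne
    exact hcon ⟨q, r, hq, hr, hne, hq3, by omega, by omega, h3, h4⟩)
  have hNR : (2 : ℝ) ^ 24 ≤ N := by exact_mod_cast hN
  have hNpos : (0 : ℝ) < N := by linarith [show (0 : ℝ) < 2 ^ 24 by norm_num]
  have t3 := theta_le_log4_mul_x (x := ((N / 3 : ℕ) : ℝ)) (by positivity)
  have t7 := theta_le_log4_mul_x (x := ((N / 7 : ℕ) : ℝ)) (by positivity)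
  have d3 : ((N / 3 : ℕ) : ℝ) ≤ N / 3 := Nat.cast_div_le
  have d7 : ((N / 7 : ℕ) : ℝ) ≤ N / 7 := Nat.cast_div_le
  have l4 : Real.log 4 = 2 * Real.log 2 := by
    rw [show (4 : ℝ) = 2 ^ 2 by norm_num, Real.log_pow]; norm_num
  rw [l4] at t3 t7
  have hlo := Real.log_two_gt_d9
  have hhi := Real.log_two_lt_d9
  have hps := psi_sub_theta_le (x := (N : ℝ)) (by linarith [show (1 : ℝ) < 2 ^ 24 by norm_num])
  set s := Real.sqrt (N : ℝ) with hs
  have hss : s * s = N := Real.mul_self_sqrt hNpos.le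
  have hs0 : 4096 ≤ s := by
    apply Real.le_sqrt_of_sq_le
    norm_num at hNR ⊢
    exact hNR
  have hl1 : Real.log (N + 1) ≤ Real.log N + 1 := by
    have : Real.log (N + 1) ≤ Real.log (2 * N) := by
      apply Real.log_le_log (by linarith)
      linarith [show (1 : ℝ) < 2 ^ 24 by norm_num]
    rw [Real.log_mul (by norm_num) hNpos.ne'] at this
    linarith
  have hL : Real.log N ≤ 14.637 + s / 2048 := by
    have e : Real.log N = 2 * Real.log s := by
      rw [← hss, Real.log_mul (by linarith) (by linarith)]; ring
    have e2 : Real.log s = 12 * Real.log 2 + Real.log (s / 4096) := by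
      rw [Real.log_div (by linarith) (by norm_num),
        show (4096 : ℝ) = 2 ^ 12 by norm_num, Real.log_pow]
      push_cast; ring
    have e3 := Real.log_le_sub_one_of_pos (x := s / 4096) (by positivity)
    rw [e, e2]
    linarith
  have m3 : Real.log 2 * ((N / 3 : ℕ) : ℝ) ≤ Real.log 2 * (N / 3) := by gcongr
  have m7 : Real.log 2 * ((N / 7 : ℕ) : ℝ) ≤ Real.log 2 * (N / 7) := by gcongr
  have hfin : Real.log 2 * N / 21 ≤ 4 * Real.log N + 1 + 4 * s * Real.log N := by
    linarith
  have hfin2 : (0.033 : ℝ) * (s * s) ≤ 4 * Real.log N + 1 + 4 * s * Real.log N := by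
    rw [hss]; nlinarith
  have hfin3 : 4 * s * Real.log N ≤ 4 * s * (14.637 + s / 2048) := by gcongr
  nlinarith

theorem small_step {N : ℕ} (q r m : ℕ) (hq : q.Prime) (hr : r.Prime) (hne : q ≠ r)
    (h3 : q % 3 = 2) (hqN : q ≤ N) (hrN : r ≤ N) (hm1 : m ≤ 2 * q) (hm2 : m ≤ 2 * r)
    (h : m ≤ N → ∃ q r : ℕ, q.Prime ∧ r.Prime ∧ q ≠ r ∧ q % 3 = 2 ∧ N < 2 * q ∧ N < 2 * r ∧
      q ≤ N ∧ r ≤ N) :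
    ∃ q r : ℕ, q.Prime ∧ r.Prime ∧ q ≠ r ∧ q % 3 = 2 ∧ N < 2 * q ∧ N < 2 * r ∧
      q ≤ N ∧ r ≤ N := by
  by_cases hN : m ≤ N
  · exact h hN
  · exact ⟨q, r, hq, hr, hne, h3, by omega, by omega, hqN, hrN⟩

theorem all_case (N : ℕ) (hN : 11 ≤ N) :
    ∃ q r : ℕ, q.Prime ∧ r.Prime ∧ q ≠ r ∧ q % 3 = 2 ∧ N < 2 * q ∧ N < 2 * r ∧
      q ≤ N ∧ r ≤ N := by
  refine small_step 11 7 14 (by norm_num) (by norm_num) (by norm_num) (by norm_num)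
    (by omega) (by omega) (by norm_num) (by norm_num) fun hN => ?_
  refine small_step 11 13 22 (by norm_num) (by norm_num) (by norm_num) (by norm_num)
    (by omega) (by omega) (by norm_num) (by norm_num) fun hN => ?_
  refine small_step 17 19 34 (by norm_num) (by norm_num) (by norm_num) (by norm_num)
    (by omega) (by omega) (by norm_num) (by norm_num) fun hN => ?_
  refine small_step 29 31 58 (by norm_num) (by norm_num) (by norm_num) (by norm_num)
    (by omega) (by omega) (by norm_num) (by norm_num) fun hN => ?_
  refine small_step 47 53 94 (by norm_num) (by norm_num) (by norm_num) (by norm_num)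
    (by omega) (by omega) (by norm_num) (by norm_num) fun hN => ?_
  refine small_step 83 89 166 (by norm_num) (by norm_num) (by norm_num) (by norm_num)
    (by omega) (by omega) (by norm_num) (by norm_num) fun hN => ?_
  refine small_step 149 163 298 (by norm_num) (by norm_num) (by norm_num) (by norm_num)
    (by omega) (by omega) (by norm_num) (by norm_num) fun hN => ?_
  refine small_step 293 283 566 (by norm_num) (by norm_num) (by norm_num) (by norm_num)
    (by omega) (by omega) (by norm_num) (by norm_num) fun hN => ?_
  refine small_step 557 563 1114 (by norm_num) (by norm_num) (by norm_num) (by norm_num)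
    (by omega) (by omega) (by norm_num) (by norm_num) fun hN => ?_
  refine small_step 1103 1109 2206 (by norm_num) (by norm_num) (by norm_num) (by norm_num)
    (by omega) (by omega) (by norm_num) (by norm_num) fun hN => ?_
  refine small_step 2153 2203 4306 (by norm_num) (by norm_num) (by norm_num) (by norm_num)
    (by omega) (by omega) (by norm_num) (by norm_num) fun hN => ?_
  refine small_step 4289 4297 8578 (by norm_num) (by norm_num) (by norm_num) (by norm_num)
    (by omega) (by omega) (by norm_num) (by norm_num) fun hN => ?_
  refine small_step 8573 8563 17126 (by norm_num) (by norm_num) (by norm_num) (by norm_num)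
    (by omega) (by omega) (by norm_num) (by norm_num) fun hN => ?_
  refine small_step 17117 17123 34234 (by norm_num) (by norm_num) (by norm_num) (by norm_num)
    (by omega) (by omega) (by norm_num) (by norm_num) fun hN => ?_
  refine small_step 34217 34231 68434 (by norm_num) (by norm_num) (by norm_num) (by norm_num)
    (by omega) (by omega) (by norm_num) (by norm_num) fun hN => ?_
  refine small_step 68399 68389 136778 (by norm_num) (by norm_num) (by norm_num) (by norm_num)
    (by omega) (by omega) (by norm_num) (by norm_num) fun hN => ?_
  refine small_step 136769 136777 273538 (by norm_num) (by norm_num) (by norm_num) (by norm_num)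
    (by omega) (by omega) (by norm_num) (by norm_num) fun hN => ?_
  refine small_step 273521 273527 547042 (by norm_num) (by norm_num) (by norm_num) (by norm_num)
    (by omega) (by omega) (by norm_num) (by norm_num) fun hN => ?_
  refine small_step 547037 547021 1094042 (by norm_num) (by norm_num) (by norm_num) (by norm_num)
    (by omega) (by omega) (by norm_num) (by norm_num) fun hN => ?_
  refine small_step 1093997 1094029 2187994 (by norm_num) (by norm_num) (by norm_num) (by norm_num)
    (by omega) (by omega) (by norm_num) (by norm_num) fun hN => ?_
  refine small_step 2187971 2187979 4375942 (by norm_num) (by norm_num) (by norm_num) (by norm_num)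
    (by omega) (by omega) (by norm_num) (by norm_num) fun hN => ?_
  refine small_step 4375913 4375937 8751826 (by norm_num) (by norm_num) (by norm_num) (by norm_num)
    (by omega) (by omega) (by norm_num) (by norm_num) fun hN => ?_
  refine small_step 8751803 8751817 17503606 (by norm_num) (by norm_num) (by norm_num) (by norm_num)
    (by omega) (by omega) (by norm_num) (by norm_num) fun hN => ?_
  exact large_case N (by omega)

theorem factorial_factorization_one (n q : ℕ) (hn : 11 ≤ n) (hq : q.Prime) (h1 : n < 2 * q) (h2 : q ≤ n) :
    (n.factorial).factorization q = 1 := by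
  have hlog : Nat.log q n < 2 := Nat.log_lt_of_lt_pow (by omega) (by nlinarith)
  rw [Nat.factorization_factorial hq hlog]
  simp only [Nat.Ico_succ_singleton, Finset.sum_singleton, pow_one]
  exact Nat.div_eq_of_lt_le (by omega) (by omega)

theorem two_pow_dvd (m : ℕ) : 2 ^ m ∣ (2 * m).factorial := by
  induction m with
  | zero => simp
  | succ m ih =>
    rw [show 2 * (m + 1) = 2 * m + 1 + 1 by ring, Nat.factorial_succ, Nat.factorial_succ, pow_succ,
      mul_comm]
    exact mul_dvd_mul ⟨m + 1, by ring⟩ (ih.mul_left _)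

theorem le_two_pow (n : ℕ) (hn : 11 ≤ n) : n ≤ 2 ^ (n.factorial).factorization 2 := by
  have h1 : 2 ^ (n / 2) ∣ n.factorial :=
    (two_pow_dvd (n / 2)).trans (Nat.factorial_dvd_factorial (by omega))
  have h2 : n / 2 ≤ (n.factorial).factorization 2 :=
    (Nat.prime_two.pow_dvd_iff_le_factorization (Nat.factorial_ne_zero n)).1 h1
  have h3 : ∀ m, 3 ≤ m → 2 * m + 1 ≤ 2 ^ m := by
    intro m hm
    induction m, hm using Nat.le_induction with
    | base => norm_num
    | succ m hm ih => rw [pow_succ]; omega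
  have h4 := h3 (n / 2) (by omega)
  have h5 := Nat.pow_le_pow_right (n := 2) (by norm_num) h2
  omega


/-- Let `n ≥ 11` and let `p : Fin k → ℕ` be the strictly increasing enumeration of the
prime factors of `n!`, so that `n! = p 0 ^ α 0 * ⋯ * p (k-1) ^ α (k-1)` with all
multiplicities `α i = (n !).factorization (p i) ≥ 1` and `p 0 = 2`. Then the two largest
prime factors occur with multiplicity exactly `1`, the largest prime factor is at most
`2 ^ α 0` (where `α 0` is the multiplicity of `2`), and there is a prime `q ≡ 2 (mod 3)`
exactly dividing `n!` to the first power. -/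
theorem factorial_factorization_structure (n : ℕ) (hn : 11 ≤ n)
    (k : ℕ) (p : Fin k → ℕ) (hmono : StrictMono p)
    (hrange : ∀ q : ℕ, q ∈ (n.factorial).primeFactors ↔ ∃ i : Fin k, p i = q) :
    ∃ hk : 2 ≤ k,
      (n.factorial).factorization (p ⟨k - 1, by omega⟩) = 1 ∧
      (n.factorial).factorization (p ⟨k - 2, by omega⟩) = 1 ∧
      p ⟨k - 1, by omega⟩ ≤ 2 ^ (n.factorial).factorization 2 ∧
      ∃ q : ℕ, q.Prime ∧ q % 3 = 2 ∧
        q ∣ n.factorial ∧ ¬ q ^ 2 ∣ n.factorial := by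
  obtain ⟨q, r, hq, hr, hne, hq3, hq1, hr1, hqn, hrn⟩ := all_case n hn
  have hmem : ∀ {a : ℕ}, a.Prime → a ≤ n → ∃ i : Fin k, p i = a := fun ha han =>
    (hrange _).1 (Nat.mem_primeFactors.2 ⟨ha, (ha.dvd_factorial).2 han, Nat.factorial_ne_zero n⟩)
  have hprop : ∀ i : Fin k, (p i).Prime ∧ p i ≤ n := by
    intro i
    have h := Nat.mem_primeFactors.1 ((hrange (p i)).2 ⟨i, rfl⟩)
    exact ⟨h.1, (h.1.dvd_factorial).1 h.2.1⟩
  obtain ⟨i, hi⟩ := hmem hq hqn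
  obtain ⟨j, hj⟩ := hmem hr hrn
  have hij : i.val ≠ j.val := by
    intro h
    apply hne
    rw [← hi, ← hj, Fin.ext h]
  have hk : 2 ≤ k := by
    have := i.isLt
    have := j.isLt
    omega
  have hil := i.isLt
  have hjl := j.isLt
  have hbig : ∀ l : Fin k, k - 2 ≤ l.val → n < 2 * p l := by
    intro l hl
    by_cases h : i.val ≤ l.val
    · have := hmono.monotone (show i ≤ l from h)
      omega
    · have := hmono.monotone (show j ≤ l from (by omega : j.val ≤ l.val))
      omega
  refine ⟨hk, ?_, ?_, ?_, q, hq, hq3, (hq.dvd_factorial).2 hqn, ?_⟩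
  · exact factorial_factorization_one n _ hn (hprop _).1 (hbig _ (by simp only []; omega)) (hprop _).2
  · exact factorial_factorization_one n _ hn (hprop _).1 (hbig _ (by simp)) (hprop _).2
  · exact (hprop _).2.trans (le_two_pow n hn)
  · rw [hq.pow_dvd_iff_le_factorization (Nat.factorial_ne_zero n),
      factorial_factorization_one n q hn hq hq1 hqn]
    norm_num
end
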